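/- arXiv:0812.0217 — 2 statements merged into one kernel-verified Lean document; each statement's English description precedes it below -/
import Mathlib

section
/- Let a ∈ ℝ. On U = {(u,φ,p_u,p_φ) ∈ ℝ⁴ : 0 < u < 1}, let P be the constant matrix with P₁₃ = P₂₄ = 1, P₃₁ = P₄₂ = −1 and other entries 0, and let Π′ be the antisymmetric complex matrix with upper entries Π′₁₂ = u^{1/3}, Π′₁₃ = i·u^{1/3}·p_u − u^{4/3}·p_φ/(1−u²), Π′₁₄ = 0, Π′₂₃ = (1−4u²)·p_u/(3u^{2/3}(1−u²)) + i·u^{1/3}(4−u²)·p_φ/(3(1−u²)²), Π′₂₄ = 0, Π′₃₄ = i·a·e^{iφ}/(2u^{1/3}√(1−u²)). Then P and Π′ are compatible: for all λ, μ ∈ ℂ the matrix λP + μΠ′ satisfies the Jacobi condition Σ_l (Π_{li}∂_lΠ_{jk} + Π_{lj}∂_lΠ_{ki} + Π_{lk}∂_lΠ_{ij}) = 0 on U for all i,j,k. -/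
open Complex

/-- Partial derivative of a ℂ-valued function on ℝ⁴ in the `i`-th coordinate. -/
noncomputable def pdC (i : Fin 4) (f : (Fin 4 → ℝ) → ℂ) (z : Fin 4 → ℝ) : ℂ :=
  fderiv ℝ f z (Pi.single i 1)

/-- The second (complex) Poisson matrix Π′ of the Goryachev system on T*S²,
in coordinates z = (u, φ, p_u, p_φ); it is P′_{μν} at μ = 0, ν = −a². -/
noncomputable def GorP (a : ℝ) (z : Fin 4 → ℝ) : Matrix (Fin 4) (Fin 4) ℂ :=
  let e12 : ℂ := ((z 0 ^ ((1 : ℝ) / 3) : ℝ) : ℂ)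
  let e13 : ℂ := Complex.I * ((z 0 ^ ((1 : ℝ) / 3) * z 2 : ℝ) : ℂ)
    - ((z 0 ^ ((4 : ℝ) / 3) * z 3 / (1 - (z 0) ^ 2) : ℝ) : ℂ)
  let e23 : ℂ := (((1 - 4 * (z 0) ^ 2) * z 2 / (3 * z 0 ^ ((2 : ℝ) / 3) * (1 - (z 0) ^ 2)) : ℝ) : ℂ)
    + Complex.I * ((z 0 ^ ((1 : ℝ) / 3) * (4 - (z 0) ^ 2) * z 3 / (3 * (1 - (z 0) ^ 2) ^ 2) : ℝ) : ℂ)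
  let e34 : ℂ := Complex.I * (a : ℂ) * Complex.exp (Complex.I * ((z 1 : ℝ) : ℂ))
    / ((2 * z 0 ^ ((1 : ℝ) / 3) * Real.sqrt (1 - (z 0) ^ 2) : ℝ) : ℂ)
  !![0, e12, e13, 0;
     -e12, 0, e23, 0;
     -e13, -e23, 0, e34;
     0, 0, -e34, 0]

/-- The canonical Poisson matrix P on ℝ⁴, as a complex matrix. -/
noncomputable def canPC : Matrix (Fin 4) (Fin 4) ℂ :=
  !![0, 0, 1, 0;
     0, 0, 0, 1;
     -1, 0, 0, 0;
     0, -1, 0, 0]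

/-- The `(i, j, k)` component of the Jacobiator of a matrix `A` with derivatives `D l = ∂_l A`. -/
def jacobiator (A : Matrix (Fin 4) (Fin 4) ℂ) (D : Fin 4 → Matrix (Fin 4) (Fin 4) ℂ)
    (i j k : Fin 4) : ℂ :=
  ∑ l : Fin 4, (A l i * D l j k + A l j * D l k i + A l k * D l i j)

lemma jacobiator_cycle (A : Matrix (Fin 4) (Fin 4) ℂ) (D : Fin 4 → Matrix (Fin 4) (Fin 4) ℂ)
    (i j k : Fin 4) : jacobiator A D i j k = jacobiator A D j k i :=
  Finset.sum_congr rfl fun _ _ => by ring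

lemma jacobiator_swap (A : Matrix (Fin 4) (Fin 4) ℂ) {D : Fin 4 → Matrix (Fin 4) (Fin 4) ℂ}
    (hD : ∀ l i j, D l i j = -D l j i) (i j k : Fin 4) :
    jacobiator A D i j k = -jacobiator A D j i k := by
  unfold jacobiator
  rw [← Finset.sum_neg_distrib]
  refine Finset.sum_congr rfl fun l _ => ?_
  rw [hD l j k, hD l k i, hD l i j]
  ring

/-- In dimension four, the Jacobi condition of an antisymmetric matrix reduces to the four
increasing triples of indices. -/
lemma jacobiator_eq_zero {A : Matrix (Fin 4) (Fin 4) ℂ} {D : Fin 4 → Matrix (Fin 4) (Fin 4) ℂ}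
    (hD : ∀ l i j, D l i j = -D l j i)
    (h012 : jacobiator A D 0 1 2 = 0) (h013 : jacobiator A D 0 1 3 = 0)
    (h023 : jacobiator A D 0 2 3 = 0) (h123 : jacobiator A D 1 2 3 = 0) (i j k : Fin 4) :
    jacobiator A D i j k = 0 := by
  have hc := jacobiator_cycle A D
  have hs := jacobiator_swap A hD
  have hdiag : ∀ i k, jacobiator A D i i k = 0 := fun i k => self_eq_neg.mp (hs i i k)
  generalize jacobiator A D = J at *
  have hperm : ∀ i j k, J i j k = 0 → J j k i = 0 ∧ J k i j = 0 ∧ J j i k = 0 ∧ J i k j = 0 ∧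
      J k j i = 0 := by
    intro i j k h
    have h₁ : J j k i = 0 := hc i j k ▸ h
    have h₂ : J k i j = 0 := hc j k i ▸ h₁
    exact ⟨h₁, h₂, by rw [hs, h, neg_zero], by rw [hs, h₂, neg_zero], by rw [hs, h₁, neg_zero]⟩
  have p012 := hperm _ _ _ h012
  have p013 := hperm _ _ _ h013
  have p023 := hperm _ _ _ h023
  have p123 := hperm _ _ _ h123
  have hdiag₂ : ∀ i k, J i k i = 0 := fun i k => (hperm _ _ _ (hdiag i k)).2.2.2.1
  have hdiag₃ : ∀ i k, J k i i = 0 := fun i k => (hperm _ _ _ (hdiag i k)).2.1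
  fin_cases i <;> fin_cases j <;> fin_cases k <;>
    simp only [Fin.zero_eta, Fin.mk_one, Fin.reduceFinMk, hdiag, hdiag₂, hdiag₃, h012, h013, h023,
      h123, p012, p013, p023, p123]

lemma HasDerivAt.hasFDerivAt_comp_coord {g : ℝ → ℂ} {g' : ℂ} {z : Fin 4 → ℝ} {i : Fin 4}
    (hg : HasDerivAt g g' (z i)) :
    HasFDerivAt (fun w : Fin 4 → ℝ => g (w i))
      ((ContinuousLinearMap.proj (R := ℝ) (φ := fun _ : Fin 4 => ℝ) i).smulRight g') z := by
  have hp : HasFDerivAt (fun w : Fin 4 → ℝ => w i)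
      (ContinuousLinearMap.proj (R := ℝ) (φ := fun _ : Fin 4 => ℝ) i) z :=
    (ContinuousLinearMap.proj (R := ℝ) (φ := fun _ : Fin 4 => ℝ) i).hasFDerivAt
  exact (HasFDerivAt.comp z hg.hasFDerivAt hp).congr_fderiv (by ext; simp)

lemma pdC_coord_mul_coord {g h : ℝ → ℂ} {g' h' : ℂ} {z : Fin 4 → ℝ} {i j : Fin 4}
    (hg : HasDerivAt g g' (z i)) (hh : HasDerivAt h h' (z j)) :
    DifferentiableAt ℝ (fun w : Fin 4 → ℝ => g (w i) * h (w j)) z ∧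
    ∀ l, pdC l (fun w => g (w i) * h (w j)) z =
      (if l = i then g' * h (z j) else 0) + (if l = j then g (z i) * h' else 0) := by
  have H := hg.hasFDerivAt_comp_coord.mul hh.hasFDerivAt_comp_coord
  refine ⟨H.differentiableAt, fun l => ?_⟩
  rw [pdC, show (fun w : Fin 4 → ℝ => g (w i) * h (w j)) =
    (fun w => g (w i)) * (fun w => h (w j)) from rfl, H.fderiv]
  simp [Pi.single_apply, eq_comm]
  split_ifs <;> ring

lemma pdC_add {f g : (Fin 4 → ℝ) → ℂ} {z : Fin 4 → ℝ} (hf : DifferentiableAt ℝ f z)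
    (hg : DifferentiableAt ℝ g z) (l : Fin 4) :
    pdC l (fun w => f w + g w) z = pdC l f z + pdC l g z := by
  simp [pdC, fderiv_fun_add hf hg]

lemma pdC_const_add_const_mul (c m : ℂ) (f : (Fin 4 → ℝ) → ℂ) (z : Fin 4 → ℝ) (l : Fin 4) :
    pdC l (fun w => c + m * f w) z = m * pdC l f z := by
  simp only [pdC, ← smul_eq_mul, fderiv_const_add]
  rw [show (fun w => m • f w) = m • f from rfl, fderiv_const_smul_field]
  rfl

lemma pdC_neg (f : (Fin 4 → ℝ) → ℂ) (z : Fin 4 → ℝ) (l : Fin 4) :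
    pdC l (fun w => -f w) z = -pdC l f z := by
  simp [pdC, fderiv_fun_neg]

lemma hasDerivAt_rpow_third {u : ℝ} (h0 : 0 < u) :
    HasDerivAt (fun x : ℝ => x ^ ((1 : ℝ) / 3)) (u ^ ((1 : ℝ) / 3) / (3 * u)) u := by
  convert Real.hasDerivAt_rpow_const (p := (1 : ℝ) / 3) (Or.inl h0.ne') using 1
  rw [Real.rpow_sub_one h0.ne']
  field_simp

lemma rpow_four_thirds {u : ℝ} (h0 : 0 < u) :
    u ^ ((4 : ℝ) / 3) = u * u ^ ((1 : ℝ) / 3) := by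
  rw [show (4 : ℝ) / 3 = 1 + 1 / 3 by norm_num, Real.rpow_add h0, Real.rpow_one]

lemma rpow_two_thirds {u : ℝ} (h0 : 0 < u) :
    u ^ ((2 : ℝ) / 3) = u / u ^ ((1 : ℝ) / 3) := by
  rw [show (2 : ℝ) / 3 = 1 - 1 / 3 by norm_num, Real.rpow_sub h0, Real.rpow_one]

lemma hasDerivAt_rpow_four_thirds_div {u : ℝ} (h0 : 0 < u) (h1 : u < 1) :
    HasDerivAt (fun x : ℝ => x ^ ((4 : ℝ) / 3) / (1 - x ^ 2))
      (u ^ ((1 : ℝ) / 3) * (4 + 2 * u ^ 2) / (3 * (1 - u ^ 2) ^ 2)) u := by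
  have hs : 1 - u ^ 2 ≠ 0 := by nlinarith
  have hd : HasDerivAt (fun x : ℝ => 1 - x ^ 2) (-(2 * u)) u := by
    simpa using (hasDerivAt_pow 2 u).const_sub 1
  refine ((Real.hasDerivAt_rpow_const (p := (4 : ℝ) / 3) (Or.inl h0.ne')).div
    hd hs).congr_deriv ?_
  rw [Real.rpow_sub_one h0.ne', rpow_four_thirds h0]
  field_simp
  ring

lemma hasDerivAt_inv_rpow_third_mul_sqrt {u : ℝ} (h0 : 0 < u) (h1 : u < 1) :
    HasDerivAt (fun x : ℝ => (2 * x ^ ((1 : ℝ) / 3) * √(1 - x ^ 2))⁻¹)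
      (-((1 - 4 * u ^ 2) / (3 * u * (1 - u ^ 2))) *
        (2 * u ^ ((1 : ℝ) / 3) * √(1 - u ^ 2))⁻¹) u := by
  have hs : 0 < 1 - u ^ 2 := by nlinarith
  have hr : 0 < u ^ ((1 : ℝ) / 3) := Real.rpow_pos_of_pos h0 _
  have hq : 0 < √(1 - u ^ 2) := Real.sqrt_pos.mpr hs
  have hsq : √(1 - u ^ 2) ^ 2 = 1 - u ^ 2 := Real.sq_sqrt hs.le
  have hd : HasDerivAt (fun x : ℝ => 1 - x ^ 2) (-(2 * u)) u := by
    simpa using (hasDerivAt_pow 2 u).const_sub 1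
  refine ((((hasDerivAt_rpow_third h0).const_mul 2).mul (hd.sqrt hs.ne')).inv
    (by simp only [Pi.mul_apply]; positivity)).congr_deriv ?_
  simp only [Pi.mul_apply]
  field_simp
  rw [hsq]
  ring

lemma GorP_antisymm (a : ℝ) (z : Fin 4 → ℝ) (i j : Fin 4) : GorP a z i j = -GorP a z j i := by
  fin_cases i <;> fin_cases j <;> simp [GorP]

lemma pdC_GorP_swap (a : ℝ) (z : Fin 4 → ℝ) (l i j : Fin 4) :
    pdC l (fun w => GorP a w i j) z = -pdC l (fun w => GorP a w j i) z := by
  rw [← pdC_neg]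
  simp only [← GorP_antisymm]

lemma pdC_GorP_zero_one (a : ℝ) {z : Fin 4 → ℝ} (h0 : 0 < z 0) (l : Fin 4) :
    pdC l (fun w => GorP a w 0 1) z =
      if l = 0 then ((z 0 ^ ((1 : ℝ) / 3) / (3 * z 0) : ℝ) : ℂ) else 0 := by
  have H := (pdC_coord_mul_coord (hasDerivAt_rpow_third h0).ofReal_comp
    (hasDerivAt_const (z 0) (1 : ℂ))).2 l
  simpa [GorP] using H

lemma pdC_GorP_zero_two (a : ℝ) {z : Fin 4 → ℝ} (h0 : 0 < z 0) (h1 : z 0 < 1) (l : Fin 4) :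
    pdC l (fun w => GorP a w 0 2) z =
      ![I * ((z 0 ^ ((1 : ℝ) / 3) / (3 * z 0) : ℝ) : ℂ) * (z 2 : ℂ) -
          ((z 0 ^ ((1 : ℝ) / 3) * (4 + 2 * z 0 ^ 2) / (3 * (1 - z 0 ^ 2) ^ 2) : ℝ) : ℂ) * (z 3 : ℂ),
        0, I * ((z 0 ^ ((1 : ℝ) / 3) : ℝ) : ℂ),
        -((z 0 ^ ((4 : ℝ) / 3) / (1 - z 0 ^ 2) : ℝ) : ℂ)] l := by
  have H₁ := pdC_coord_mul_coord ((hasDerivAt_rpow_third h0).ofReal_comp.const_mul I)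
    (hasDerivAt_id (z 2)).ofReal_comp
  have H₂ := pdC_coord_mul_coord (hasDerivAt_rpow_four_thirds_div h0 h1).ofReal_comp.neg
    (hasDerivAt_id (z 3)).ofReal_comp
  have H := pdC_add H₁.1 H₂.1 l
  rw [H₁.2, H₂.2] at H
  have hE : (fun w => GorP a w 0 2) = fun w : Fin 4 → ℝ =>
      I * ((w 0 ^ ((1 : ℝ) / 3) : ℝ) : ℂ) * ((id (w 2) : ℝ) : ℂ) +
        (-fun x : ℝ => ((x ^ ((4 : ℝ) / 3) / (1 - x ^ 2) : ℝ) : ℂ)) (w 0) *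
          ((id (w 3) : ℝ) : ℂ) := by
    funext w
    simp [GorP]
    ring
  rw [hE, H]
  fin_cases l <;> simp
  ring

lemma pdC_GorP_one_two (a : ℝ) {z : Fin 4 → ℝ} (h0 : 0 < z 0) (h1 : z 0 < 1) :
    pdC 1 (fun w => GorP a w 1 2) z = 0 ∧ pdC 2 (fun w => GorP a w 1 2) z =
      (((1 - 4 * z 0 ^ 2) / (3 * z 0 ^ ((2 : ℝ) / 3) * (1 - z 0 ^ 2)) : ℝ) : ℂ) := by
  have hs : 1 - z 0 ^ 2 ≠ 0 := by nlinarith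
  have hr : z 0 ^ ((2 : ℝ) / 3) ≠ 0 := (Real.rpow_pos_of_pos h0 _).ne'
  have hδ : DifferentiableAt ℝ
      (fun x : ℝ => (1 - 4 * x ^ 2) / (3 * x ^ ((2 : ℝ) / 3) * (1 - x ^ 2))) (z 0) := by
    have := (Real.hasDerivAt_rpow_const (p := (2 : ℝ) / 3) (Or.inl h0.ne')).differentiableAt
    fun_prop (disch := simp [hs, hr, h0.ne'])
  have hε : DifferentiableAt ℝ
      (fun x : ℝ => x ^ ((1 : ℝ) / 3) * (4 - x ^ 2) / (3 * (1 - x ^ 2) ^ 2)) (z 0) := by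
    have := (hasDerivAt_rpow_third h0).differentiableAt
    fun_prop (disch := simp [hs, h0.ne'])
  have H₁ := pdC_coord_mul_coord hδ.hasDerivAt.ofReal_comp (hasDerivAt_id (z 2)).ofReal_comp
  have H₂ := pdC_coord_mul_coord (hε.hasDerivAt.ofReal_comp.const_mul I)
    (hasDerivAt_id (z 3)).ofReal_comp
  have H := pdC_add H₁.1 H₂.1
  simp only [H₁.2, H₂.2] at H
  have hE : (fun w => GorP a w 1 2) = fun w : Fin 4 → ℝ =>
      (((1 - 4 * w 0 ^ 2) / (3 * w 0 ^ ((2 : ℝ) / 3) * (1 - w 0 ^ 2)) : ℝ) : ℂ) *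
          ((id (w 2) : ℝ) : ℂ) +
        I * ((w 0 ^ ((1 : ℝ) / 3) * (4 - w 0 ^ 2) / (3 * (1 - w 0 ^ 2) ^ 2) : ℝ) : ℂ) *
          ((id (w 3) : ℝ) : ℂ) := by
    funext w
    simp [GorP]
    ring
  rw [hE, H, H]
  simp

lemma pdC_GorP_two_three (a : ℝ) {z : Fin 4 → ℝ} (h0 : 0 < z 0) (h1 : z 0 < 1) (l : Fin 4) :
    pdC l (fun w => GorP a w 2 3) z =
      ![-(((1 - 4 * z 0 ^ 2) / (3 * z 0 * (1 - z 0 ^ 2)) : ℝ) : ℂ) * GorP a z 2 3,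
        I * GorP a z 2 3, 0, 0] l := by
  have hexp : HasDerivAt (fun x : ℝ => I * a * exp (I * (x : ℂ)))
      (I * a * (exp (I * (z 1 : ℂ)) * (I * ((1 : ℝ) : ℂ)))) (z 1) :=
    (((hasDerivAt_id (z 1)).ofReal_comp.const_mul I).cexp).const_mul (I * a)
  have H := (pdC_coord_mul_coord (hasDerivAt_inv_rpow_third_mul_sqrt h0 h1).ofReal_comp hexp).2 l
  have hE : ∀ w, GorP a w 2 3 = (((2 * w 0 ^ ((1 : ℝ) / 3) * √(1 - w 0 ^ 2))⁻¹ : ℝ) : ℂ) *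
      (I * a * exp (I * (w 1 : ℂ))) := by
    intro w
    rw [ofReal_inv, inv_mul_eq_div]
    rfl
  simp only [hE, H]
  fin_cases l <;> simp
  all_goals ring

lemma pdC_GorP_zero_three (a : ℝ) (z : Fin 4 → ℝ) (l : Fin 4) :
    pdC l (fun w => GorP a w 0 3) z = 0 := by
  simp [GorP, pdC]

lemma pdC_GorP_one_three (a : ℝ) (z : Fin 4 → ℝ) (l : Fin 4) :
    pdC l (fun w => GorP a w 1 3) z = 0 := by
  simp [GorP, pdC]

/-- P and the Goryachev matrix Π′ are compatible: every complex linear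
combination λP + μΠ′ satisfies the Jacobi condition on 0 < u < 1. -/
theorem GorP_compatible (a : ℝ) (lam mu : ℂ) (z : Fin 4 → ℝ)
    (h0 : 0 < z 0) (h1 : z 0 < 1) :
    ∀ i j k : Fin 4,
      ∑ l : Fin 4,
        ((lam • canPC + mu • GorP a z) l i
            * pdC l (fun w => (lam • canPC + mu • GorP a w) j k) z
          + (lam • canPC + mu • GorP a z) l j
            * pdC l (fun w => (lam • canPC + mu • GorP a w) k i) z
          + (lam • canPC + mu • GorP a z) l k
            * pdC l (fun w => (lam • canPC + mu • GorP a w) i j) z) = 0 := by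
  have hpd : ∀ l j k, pdC l (fun w => (lam • canPC + mu • GorP a w) j k) z =
      mu * pdC l (fun w => GorP a w j k) z :=
    fun l j k => pdC_const_add_const_mul (lam * canPC j k) mu (fun w => GorP a w j k) z l
  have hu : (z 0 : ℂ) ≠ 0 := ofReal_ne_zero.mpr h0.ne'
  have hs : 1 - (z 0 : ℂ) ^ 2 ≠ 0 := by
    exact_mod_cast (show 1 - z 0 ^ 2 ≠ 0 by nlinarith)
  have hr : ((z 0 ^ ((1 : ℝ) / 3) : ℝ) : ℂ) ≠ 0 :=
    ofReal_ne_zero.mpr (Real.rpow_pos_of_pos h0 _).ne'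
  have hE43 := congrArg ofReal (rpow_four_thirds h0)
  have hE23 := congrArg ofReal (rpow_two_thirds h0)
  push_cast at hE43 hE23
  rw [one_div] at hr hE43 hE23
  simp only [hpd]
  refine jacobiator_eq_zero (A := lam • canPC + mu • GorP a z)
    (D := fun l j k => mu * pdC l (fun w => GorP a w j k) z) (fun l i j => ?_) ?_ ?_ ?_ ?_
  · simp only [pdC_GorP_swap a z l i j, mul_neg]
  all_goals
    simp only [jacobiator, Fin.sum_univ_four, pdC_GorP_swap a z _ 2 0, pdC_GorP_swap a z _ 3 0,
      pdC_GorP_swap a z _ 3 1, pdC_GorP_zero_one a h0, pdC_GorP_zero_two a h0 h1,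
      pdC_GorP_one_two a h0 h1, pdC_GorP_two_three a h0 h1, pdC_GorP_zero_three,
      pdC_GorP_one_three]
    simp [canPC, GorP]
  · rw [hE43, hE23]
    field_simp
    ring_nf
    rw [I_sq]
    ring
  · ring
  · rw [hE23]
    field_simp
    ring
end

section
/- Let a, b ∈ ℝ. On U = {(u,φ,p_u,p_φ) ∈ ℝ⁴ : 0 < u < 1}, define H₁ = J₁² + J₂² + (4/3)J₃² + a·x₁/x₃^{2/3} + b/x₃^{2/3} and H₂ = −(2/3)J₃(J₁² + J₂² + (8/9)J₃² + b/x₃^{2/3}) + a·x₃^{1/3}·J₁ − 2a·x₁·J₃/(3x₃^{2/3}), where x₁ = √(1−u²)sin φ, x₂ = √(1−u²)cos φ, x₃ = u, J₁ = (u/√(1−u²))sin φ·p_φ + √(1−u²)cos φ·p_u, J₂ = (u/√(1−u²))cos φ·p_φ − √(1−u²)sin φ·p_u, J₃ = −p_φ. Let {f,g}′ be the complex bracket defined by the antisymmetric matrix Π′ with upper entries Π′₁₂ = u^{1/3}, Π′₁₃ = i·u^{1/3}·p_u − u^{4/3}·p_φ/(1−u²), Π′₁₄ = 0, Π′₂₃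 = (1−4u²)·p_u/(3u^{2/3}(1−u²)) + i·u^{1/3}(4−u²)·p_φ/(3(1−u²)²), Π′₂₄ = 0, Π′₃₄ = i·a·e^{iφ}/(2u^{1/3}√(1−u²)). Then {H₁, H₂}′ = 0 on U. -/
open Complex

/-- Partial derivative of a real-valued function on ℝ⁴. -/
noncomputable def pd4 (i : Fin 4) (f : (Fin 4 → ℝ) → ℝ) (z : Fin 4 → ℝ) : ℝ :=
  fderiv ℝ f z (Pi.single i 1)

/-- x₁ = √(1−u²) sin φ, x₂ = √(1−u²) cos φ, x₃ = u. -/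
noncomputable def sphX : Fin 3 → (Fin 4 → ℝ) → ℝ
  | 0 => fun z => Real.sqrt (1 - (z 0) ^ 2) * Real.sin (z 1)
  | 1 => fun z => Real.sqrt (1 - (z 0) ^ 2) * Real.cos (z 1)
  | 2 => fun z => z 0

/-- J₁, J₂, J₃ on T*S² in coordinates (u, φ, p_u, p_φ). -/
noncomputable def sphJ : Fin 3 → (Fin 4 → ℝ) → ℝ
  | 0 => fun z => z 0 / Real.sqrt (1 - (z 0) ^ 2) * Real.sin (z 1) * z 3
      + Real.sqrt (1 - (z 0) ^ 2) * Real.cos (z 1) * z 2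
  | 1 => fun z => z 0 / Real.sqrt (1 - (z 0) ^ 2) * Real.cos (z 1) * z 3
      - Real.sqrt (1 - (z 0) ^ 2) * Real.sin (z 1) * z 2
  | 2 => fun z => -z 3

/-- The quadratic integral H₁ of the Goryachev system on T*S². -/
noncomputable def H1Gor (a b : ℝ) (z : Fin 4 → ℝ) : ℝ :=
  (sphJ 0 z) ^ 2 + (sphJ 1 z) ^ 2 + (4 / 3) * (sphJ 2 z) ^ 2
    + a * sphX 0 z / (sphX 2 z) ^ ((2 : ℝ) / 3) + b / (sphX 2 z) ^ ((2 : ℝ) / 3)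

/-- The cubic integral H₂ of the Goryachev system on T*S². -/
noncomputable def H2Gor (a b : ℝ) (z : Fin 4 → ℝ) : ℝ :=
  -(2 / 3) * sphJ 2 z * ((sphJ 0 z) ^ 2 + (sphJ 1 z) ^ 2 + (8 / 9) * (sphJ 2 z) ^ 2
      + b / (sphX 2 z) ^ ((2 : ℝ) / 3))
    + a * (sphX 2 z) ^ ((1 : ℝ) / 3) * sphJ 0 z
    - 2 * a * sphX 0 z * sphJ 2 z / (3 * (sphX 2 z) ^ ((2 : ℝ) / 3))

/-- The complex bracket {f,g}′ of real functions associated with Π′. -/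
noncomputable def GorBr (a : ℝ) (f g : (Fin 4 → ℝ) → ℝ) (z : Fin 4 → ℝ) : ℂ :=
  ∑ i : Fin 4, ∑ j : Fin 4, (pd4 i f z : ℂ) * GorP a z i j * (pd4 j g z : ℂ)

lemma rpow_two_thirds_eq_sq {u : ℝ} (hu : 0 ≤ u) : u ^ ((2 : ℝ) / 3) = (u ^ ((1 : ℝ) / 3)) ^ 2 := by
  rw [← Real.rpow_natCast, ← Real.rpow_mul hu]
  norm_num

lemma rpow_one_third_cube {u : ℝ} (hu : 0 ≤ u) : (u ^ ((1 : ℝ) / 3)) ^ 3 = u := by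
  rw [← Real.rpow_natCast, ← Real.rpow_mul hu]
  norm_num

lemma rpow_four_thirds_eq_pow {u : ℝ} (hu : 0 ≤ u) :
    u ^ ((4 : ℝ) / 3) = (u ^ ((1 : ℝ) / 3)) ^ 4 := by
  rw [← Real.rpow_natCast, ← Real.rpow_mul hu]
  norm_num

lemma hasDerivAt_rpow_one_third {u : ℝ} (hu : 0 < u) :
    HasDerivAt (fun x : ℝ => x ^ ((1 : ℝ) / 3)) (1 / (3 * (u ^ ((1 : ℝ) / 3)) ^ 2)) u := by
  refine (Real.hasDerivAt_rpow_const (p := 1 / 3) (Or.inl hu.ne')).congr_deriv ?_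
  rw [← rpow_two_thirds_eq_sq hu.le, show (1 : ℝ) / 3 - 1 = -(2 / 3) by norm_num,
    Real.rpow_neg hu.le]
  field_simp

lemma hasDerivAt_rpow_two_thirds {u : ℝ} (hu : 0 < u) :
    HasDerivAt (fun x : ℝ => x ^ ((2 : ℝ) / 3)) (2 / (3 * u ^ ((1 : ℝ) / 3))) u := by
  refine (Real.hasDerivAt_rpow_const (p := 2 / 3) (Or.inl hu.ne')).congr_deriv ?_
  rw [show (2 : ℝ) / 3 - 1 = -(1 / 3) by norm_num, Real.rpow_neg hu.le]
  field_simp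

lemma hasDerivAt_sqrt_one_sub_sq {u : ℝ} (hu : 0 < 1 - u ^ 2) :
    HasDerivAt (fun x : ℝ => √(1 - x ^ 2)) (-u / √(1 - u ^ 2)) u := by
  refine (((hasDerivAt_pow 2 u).const_sub 1).sqrt hu.ne').congr_deriv ?_
  have := Real.sqrt_pos.2 hu
  field_simp
  ring

lemma hasFDerivAt_div_of_ne_zero {E : Type*} [NormedAddCommGroup E] [NormedSpace ℝ E]
    {f g : E → ℝ} {f' g' : E →L[ℝ] ℝ} {x : E} (hf : HasFDerivAt f f' x) (hg : HasFDerivAt g g' x)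
    (hx : g x ≠ 0) :
    HasFDerivAt (fun y => f y / g y) ((g x)⁻¹ • f' - (f x / g x ^ 2) • g') x := by
  simp only [div_eq_mul_inv]
  refine (hf.mul ((hasDerivAt_inv hx).comp_hasFDerivAt x hg)).congr_fderiv ?_
  ext v
  simp
  ring

lemma one_sub_sq_pos {u : ℝ} (h0 : 0 < u) (h1 : u < 1) : 0 < 1 - u ^ 2 := by nlinarith

/-- The gradient of `H₁`, with `c = u ^ (1/3)`, `s = √(1 - u²)`, `S = sin φ`, `C = cos φ`. -/
noncomputable def gradH1 (a b c s S C p q : ℝ) : Fin 4 → ℝ :=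
  ![-2 * c ^ 3 * p ^ 2 + 2 * c ^ 3 / s ^ 4 * q ^ 2 - a * c * S / s
      - 2 / 3 * (a * s * S + b) / c ^ 5,
    a * s * C / c ^ 2,
    2 * s ^ 2 * p,
    2 * (c ^ 6 / s ^ 2 + 4 / 3) * q]

/-- The gradient of `H₂`, with `c = u ^ (1/3)`, `s = √(1 - u²)`, `S = sin φ`, `C = cos φ`. -/
noncomputable def gradH2 (a b c s S C p q : ℝ) : Fin 4 → ℝ :=
  ![2 / 3 * q * (2 * c ^ 3 / s ^ 4 * q ^ 2 - 2 * c ^ 3 * p ^ 2 - 2 * b / (3 * c ^ 5))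
      + a / (3 * c ^ 2) * (c ^ 3 / s * S * q + s * C * p)
      + a * c * (S * q / s ^ 3 - c ^ 3 * C * p / s)
      + 2 * a * q * S / 3 * (-c / s - 2 * s / (3 * c ^ 5)),
    a * c * (c ^ 3 * C * q / s - s * S * p) + 2 * a * s * C * q / (3 * c ^ 2),
    4 / 3 * q * s ^ 2 * p + a * c * s * C,
    2 / 3 * (c ^ 6 / s ^ 2 * q ^ 2 + s ^ 2 * p ^ 2 + 8 / 9 * q ^ 2 + b / c ^ 2)
      + 2 / 3 * q * (2 * c ^ 6 / s ^ 2 * q + 16 / 9 * q) + a * c ^ 4 * S / s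
      + 2 * a * s * S / (3 * c ^ 2)]

section Gradients

variable {z : Fin 4 → ℝ}

lemma hasFDerivAt_coord (i : Fin 4) :
    HasFDerivAt (fun x : Fin 4 → ℝ => x i) (ContinuousLinearMap.proj (R := ℝ) i) z :=
  hasFDerivAt_apply i z

lemma hasFDerivAt_sphX_zero (h : 0 < 1 - z 0 ^ 2) :
    HasFDerivAt (sphX 0)
      ((-(z 0 / √(1 - z 0 ^ 2)) * Real.sin (z 1)) • ContinuousLinearMap.proj (R := ℝ) 0
        + (√(1 - z 0 ^ 2) * Real.cos (z 1)) • ContinuousLinearMap.proj (R := ℝ) 1) z := by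
  have ds := (hasDerivAt_sqrt_one_sub_sq h).comp_hasFDerivAt z (hasFDerivAt_coord 0)
  refine (ds.mul (hasFDerivAt_coord 1).sin).congr_fderiv ?_
  ext v
  simp
  ring

lemma hasFDerivAt_sphJ_zero (h : 0 < 1 - z 0 ^ 2) :
    HasFDerivAt (sphJ 0)
      ((Real.sin (z 1) * z 3 / √(1 - z 0 ^ 2) ^ 3 - z 0 * Real.cos (z 1) * z 2 / √(1 - z 0 ^ 2)) •
          ContinuousLinearMap.proj (R := ℝ) 0
        + sphJ 1 z • ContinuousLinearMap.proj (R := ℝ) 1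
        + (√(1 - z 0 ^ 2) * Real.cos (z 1)) • ContinuousLinearMap.proj (R := ℝ) 2
        + (z 0 / √(1 - z 0 ^ 2) * Real.sin (z 1)) • ContinuousLinearMap.proj (R := ℝ) 3) z := by
  have hs := (Real.sqrt_pos.2 h).ne'
  have hssq := Real.sq_sqrt h.le
  have ds := (hasDerivAt_sqrt_one_sub_sq h).comp_hasFDerivAt z (hasFDerivAt_coord 0)
  have dus := hasFDerivAt_div_of_ne_zero (hasFDerivAt_coord 0) ds hs
  refine (((dus.mul (hasFDerivAt_coord 1).sin).mul (hasFDerivAt_coord 3)).add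
    ((ds.mul (hasFDerivAt_coord 1).cos).mul (hasFDerivAt_coord 2))).congr_fderiv ?_
  ext v
  simp [sphJ]
  generalize √(1 - z 0 ^ 2) = s at *
  field_simp
  grind

lemma sphJ_zero_sq_add_sphJ_one_sq (x : Fin 4 → ℝ) (h : 0 ≤ 1 - x 0 ^ 2) :
    sphJ 0 x ^ 2 + sphJ 1 x ^ 2 = x 0 ^ 2 / (1 - x 0 ^ 2) * x 3 ^ 2 + (1 - x 0 ^ 2) * x 2 ^ 2 := by
  have hsin := Real.sin_sq_add_cos_sq (x 1)
  have hssq := Real.sq_sqrt h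
  rcases h.eq_or_lt with h | h
  · simp [sphJ, ← h]
  have hs := (Real.sqrt_pos.2 h).ne'
  simp only [sphJ]
  rw [← hssq]
  generalize √(1 - x 0 ^ 2) = s at *
  field_simp
  grind

lemma hasFDerivAt_sphJ_zero_sq_add_sphJ_one_sq (h : 0 < 1 - z 0 ^ 2) :
    HasFDerivAt (fun x => sphJ 0 x ^ 2 + sphJ 1 x ^ 2)
      ((2 * z 0 / (1 - z 0 ^ 2) ^ 2 * z 3 ^ 2 - 2 * z 0 * z 2 ^ 2) •
          ContinuousLinearMap.proj (R := ℝ) 0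
        + (2 * (1 - z 0 ^ 2) * z 2) • ContinuousLinearMap.proj (R := ℝ) 2
        + (2 * z 0 ^ 2 / (1 - z 0 ^ 2) * z 3) • ContinuousLinearMap.proj (R := ℝ) 3) z := by
  have du := (hasFDerivAt_coord (z := z) 0).pow 2
  have dr := du.const_sub 1
  have key := ((hasFDerivAt_div_of_ne_zero du dr h.ne').mul ((hasFDerivAt_coord 3).pow 2)).add
    (dr.mul ((hasFDerivAt_coord 2).pow 2))
  have hcont : Continuous fun x : Fin 4 → ℝ => 1 - x 0 ^ 2 := by fun_prop
  refine (key.congr_fderiv ?_).congr_of_eventuallyEq ?_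
  · ext v
    simp
    field_simp
    ring
  · filter_upwards [hcont.continuousAt.eventually (lt_mem_nhds h)] with x hx
    exact sphJ_zero_sq_add_sphJ_one_sq x hx.le

lemma pd4_H1Gor (a b : ℝ) (h0 : 0 < z 0) (h1 : z 0 < 1) (i : Fin 4) :
    pd4 i (H1Gor a b) z = gradH1 a b (z 0 ^ ((1 : ℝ) / 3)) √(1 - z 0 ^ 2)
      (Real.sin (z 1)) (Real.cos (z 1)) (z 2) (z 3) i := by
  have hpos := one_sub_sq_pos h0 h1
  have hs := (Real.sqrt_pos.2 hpos).ne'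
  have hc := (Real.rpow_pos_of_pos h0 ((1 : ℝ) / 3)).ne'
  have hc2 := (Real.rpow_pos_of_pos h0 ((2 : ℝ) / 3)).ne'
  have dc2 := (hasDerivAt_rpow_two_thirds h0).comp_hasFDerivAt z (hasFDerivAt_coord 0)
  have dH : HasFDerivAt (H1Gor a b) _ z :=
    (((hasFDerivAt_sphJ_zero_sq_add_sphJ_one_sq hpos).add
      (((hasFDerivAt_coord 3).neg.pow 2).const_mul (4 / 3))).add
      (hasFDerivAt_div_of_ne_zero ((hasFDerivAt_sphX_zero hpos).const_mul a) dc2 hc2)).add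
      (hasFDerivAt_div_of_ne_zero (hasFDerivAt_const b z) dc2 hc2)
  rw [pd4, dH.fderiv]
  have hssq := Real.sq_sqrt hpos.le
  have hcube := rpow_one_third_cube h0.le
  fin_cases i <;> simp [-one_div, -mul_eq_mul_left_iff, -mul_eq_mul_right_iff, gradH1,
    sphX, rpow_two_thirds_eq_sq h0.le]
  all_goals
    generalize z 0 ^ ((1 : ℝ) / 3) = c at *
    generalize √(1 - z 0 ^ 2) = s at *
    try rw [← hssq]
    try rw [← hcube]
    try field_simp
    try ring

lemma pd4_H2Gor (a b : ℝ) (h0 : 0 < z 0) (h1 : z 0 < 1) (i : Fin 4) :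
    pd4 i (H2Gor a b) z = gradH2 a b (z 0 ^ ((1 : ℝ) / 3)) √(1 - z 0 ^ 2)
      (Real.sin (z 1)) (Real.cos (z 1)) (z 2) (z 3) i := by
  have hpos := one_sub_sq_pos h0 h1
  have hs := (Real.sqrt_pos.2 hpos).ne'
  have hc := (Real.rpow_pos_of_pos h0 ((1 : ℝ) / 3)).ne'
  have hc2 := (Real.rpow_pos_of_pos h0 ((2 : ℝ) / 3)).ne'
  have dc := (hasDerivAt_rpow_one_third h0).comp_hasFDerivAt z (hasFDerivAt_coord 0)
  have dc2 := (hasDerivAt_rpow_two_thirds h0).comp_hasFDerivAt z (hasFDerivAt_coord 0)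
  have dJ2 := (hasFDerivAt_coord (z := z) 3).neg
  have dH : HasFDerivAt (H2Gor a b) _ z :=
    (((dJ2.const_mul (-(2 / 3))).mul (((hasFDerivAt_sphJ_zero_sq_add_sphJ_one_sq hpos).add
      ((dJ2.pow 2).const_mul (8 / 9))).add
      (hasFDerivAt_div_of_ne_zero (hasFDerivAt_const b z) dc2 hc2))).add
      ((dc.const_mul a).mul (hasFDerivAt_sphJ_zero hpos))).sub
      (hasFDerivAt_div_of_ne_zero (((hasFDerivAt_sphX_zero hpos).const_mul (2 * a)).mul dJ2)
        (dc2.const_mul 3) (mul_ne_zero three_ne_zero hc2))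
  rw [pd4, dH.fderiv]
  have hssq := Real.sq_sqrt hpos.le
  have hcube := rpow_one_third_cube h0.le
  fin_cases i <;> simp [-one_div, -mul_eq_mul_left_iff, -mul_eq_mul_right_iff, gradH2,
    sphX, sphJ_zero_sq_add_sphJ_one_sq z hpos.le,
    rpow_two_thirds_eq_sq h0.le]
  all_goals
    try simp only [sphJ]
    generalize z 0 ^ ((1 : ℝ) / 3) = c at *
    generalize √(1 - z 0 ^ 2) = s at *
    try rw [← hssq]
    try rw [← hcube]
    field_simp
    try ring

end Gradients

/-- The algebraic identity behind the involution: `d` and `e` are the gradients of the two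
integrals in terms of `c = u ^ (1/3)`, `s = √(1 - u²)`, `S = sin φ`, `C = cos φ`. -/
lemma bracket_identity (a b c s S C p q I : ℂ) (hc : c ≠ 0) (hs : s ≠ 0)
    (hsc : s ^ 2 = 1 - c ^ 6) (hSC : S ^ 2 + C ^ 2 = 1) (hI : I ^ 2 = -1)
    (d0 d1 d2 d3 e0 e1 e2 e3 : ℂ)
    (hd0 : d0 = -2 * c ^ 3 * p ^ 2 + 2 * c ^ 3 / s ^ 4 * q ^ 2 - a * c * S / s
      - 2 / 3 * (a * s * S + b) / c ^ 5)
    (hd1 : d1 = a * s * C / c ^ 2)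
    (hd2 : d2 = 2 * s ^ 2 * p)
    (hd3 : d3 = 2 * (c ^ 6 / s ^ 2 + 4 / 3) * q)
    (he0 : e0 = 2 / 3 * q * (2 * c ^ 3 / s ^ 4 * q ^ 2 - 2 * c ^ 3 * p ^ 2 - 2 * b / (3 * c ^ 5))
      + a / (3 * c ^ 2) * (c ^ 3 / s * S * q + s * C * p)
      + a * c * (S * q / s ^ 3 - c ^ 3 * C * p / s)
      + 2 * a * q * S / 3 * (-c / s - 2 * s / (3 * c ^ 5)))
    (he1 : e1 = a * c * (c ^ 3 * C * q / s - s * S * p) + 2 * a * s * C * q / (3 * c ^ 2))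
    (he2 : e2 = 4 / 3 * q * s ^ 2 * p + a * c * s * C)
    (he3 : e3 = 2 / 3 * (c ^ 6 / s ^ 2 * q ^ 2 + s ^ 2 * p ^ 2 + 8 / 9 * q ^ 2 + b / c ^ 2)
      + 2 / 3 * q * (2 * c ^ 6 / s ^ 2 * q + 16 / 9 * q) + a * c ^ 4 * S / s
      + 2 * a * s * S / (3 * c ^ 2)) :
    c * (d0 * e1 - d1 * e0)
      + (I * c * p - c ^ 4 * q / s ^ 2) * (d0 * e2 - d2 * e0)
      + ((1 - 4 * c ^ 6) * p / (3 * c ^ 2 * s ^ 2) + I * c * (4 - c ^ 6) * q / (3 * s ^ 4))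
        * (d1 * e2 - d2 * e1)
      + I * a * (C + I * S) / (2 * c * s) * (d2 * e3 - d3 * e2) = 0 := by
  subst hd0 hd1 hd2 hd3 he0 he1 he2 he3
  field_simp
  grind

/-- The Goryachev integrals H₁, H₂ are in involution with respect to the
second (complex) bracket {·,·}′ on 0 < u < 1 (bi-involution). -/
theorem Gor_bi_involution (a b : ℝ) (z : Fin 4 → ℝ) (h0 : 0 < z 0) (h1 : z 0 < 1) :
    GorBr a (H1Gor a b) (H2Gor a b) z = 0 := by
  have hpos := one_sub_sq_pos h0 h1
  have hs := Real.sqrt_pos.2 hpos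
  have hc := Real.rpow_pos_of_pos h0 ((1 : ℝ) / 3)
  have hssq := Real.sq_sqrt hpos.le
  have hsin := Real.sin_sq_add_cos_sq (z 1)
  have hcube := rpow_one_third_cube h0.le
  have hexp : Complex.exp (Complex.I * ((z 1 : ℝ) : ℂ))
      = (Real.cos (z 1) : ℂ) + Complex.I * (Real.sin (z 1) : ℂ) := by
    rw [mul_comm, Complex.exp_mul_I, Complex.ofReal_cos, Complex.ofReal_sin]
    ring
  simp only [GorBr, Fin.sum_univ_four, GorP, pd4_H1Gor a b h0 h1, pd4_H2Gor a b h0 h1,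
    rpow_two_thirds_eq_sq h0.le, rpow_four_thirds_eq_pow h0.le, hexp]
  generalize z 0 ^ ((1 : ℝ) / 3) = c at *
  generalize √(1 - z 0 ^ 2) = s at *
  rw [← hssq, ← hcube]
  rw [← hcube] at hssq
  generalize Real.sin (z 1) = S at *
  generalize Real.cos (z 1) = C at *
  have key := bracket_identity a b c s S C (z 2) (z 3) Complex.I (mod_cast hc.ne')
    (mod_cast hs.ne') (mod_cast (by rw [hssq]; ring)) (mod_cast hsin) Complex.I_sq
    _ _ _ _ _ _ _ _ rfl rfl rfl rfl rfl rfl rfl rfl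
  refine Eq.trans ?_ key
  simp [-one_div, -mul_eq_mul_left_iff, -mul_eq_mul_right_iff, gradH1, gradH2]
  ring
end
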